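/- Let h ∈ ℕ, let G be an h × h real matrix, and let M₂₂ be the 2h × 2h block matrix with blocks [[0, (1/2)G], [0, 0]]. Then M₂₂² = 0, and for every 2h × 2h diagonal real matrix Δ, (M₂₂Δ)² = 0; consequently I - M₂₂Δ is invertible with inverse I + M₂₂Δ and det(I - M₂₂Δ) = 1 for every diagonal Δ. -/

import Mathlib

open Matrix

/-- The LP-GRNN nonlinearity-coupling block `M₂₂ = [[0, (1/2)G], [0, 0]]`. -/
noncomputable def lpgrnnM22 {h : ℕ} (G : Matrix (Fin h) (Fin h) ℝ) :
    Matrix (Fin h ⊕ Fin h) (Fin h ⊕ Fin h) ℝ :=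
  Matrix.fromBlocks 0 ((1 / 2 : ℝ) • G) 0 0

theorem one_add_mul_one_sub_of_sq_eq_zero {R : Type*} [Ring R] {a : R} (ha : a ^ 2 = 0) :
    (1 + a) * (1 - a) = 1 := by
  rw [← (Commute.one_left a).sq_sub_sq, ha, one_pow, sub_zero]

theorem one_sub_mul_one_add_of_sq_eq_zero {R : Type*} [Ring R] {a : R} (ha : a ^ 2 = 0) :
    (1 - a) * (1 + a) = 1 := by
  simpa [sub_eq_add_neg] using one_add_mul_one_sub_of_sq_eq_zero (a := -a) (by rwa [neg_sq])

theorem toBlocks₂₁_eq_zero_of_isDiag {m n α : Type*} [Zero α] {A : Matrix (m ⊕ n) (m ⊕ n) α}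
    (hA : A.IsDiag) : A.toBlocks₂₁ = 0 := by
  ext i j
  exact hA Sum.inr_ne_inl

theorem fromBlocks_strictUpper_mul {l m n o p q α : Type*} [Fintype m] [Fintype n]
    [NonUnitalNonAssocSemiring α] (B : Matrix l n α) {A : Matrix (m ⊕ n) (p ⊕ q) α}
    (hA : A.toBlocks₂₁ = 0) :
    (fromBlocks 0 B 0 0 : Matrix (l ⊕ o) (m ⊕ n) α) * A =
      fromBlocks 0 (B * A.toBlocks₂₂) 0 0 := by
  conv_lhs => rw [← fromBlocks_toBlocks A, hA]
  simp [fromBlocks_multiply]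

section SquareMatrices

variable {m n R : Type*} [Fintype m] [Fintype n] [DecidableEq m] [DecidableEq n]

theorem fromBlocks_strictUpper_sq [Semiring R] (B : Matrix m n R) :
    (fromBlocks 0 B 0 0 : Matrix (m ⊕ n) (m ⊕ n) R) ^ 2 = 0 := by
  simp [sq, fromBlocks_multiply]

theorem det_one_sub_fromBlocks_strictUpper [CommRing R] (B : Matrix m n R) :
    (1 - fromBlocks 0 B 0 0 : Matrix (m ⊕ n) (m ⊕ n) R).det = 1 := by
  have one_sub_eq : (1 - fromBlocks 0 B 0 0 : Matrix (m ⊕ n) (m ⊕ n) R) =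
      fromBlocks 1 (-B) 0 1 := by
    simp [← fromBlocks_one, sub_eq_add_neg, fromBlocks_neg, fromBlocks_add]
  rw [one_sub_eq, det_fromBlocks_zero₂₁, det_one, det_one, one_mul]

theorem lpgrnn_M22_wellPosed_general [CommRing R] (B : Matrix m n R) :
    (fromBlocks 0 B 0 0 : Matrix (m ⊕ n) (m ⊕ n) R) ^ 2 = 0 ∧
    ∀ Δ : Matrix (m ⊕ n) (m ⊕ n) R, Δ.toBlocks₂₁ = 0 →
      (fromBlocks 0 B 0 0 * Δ) ^ 2 = 0 ∧
      (1 - fromBlocks 0 B 0 0 * Δ) * (1 + fromBlocks 0 B 0 0 * Δ) = 1 ∧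
      (1 + fromBlocks 0 B 0 0 * Δ) * (1 - fromBlocks 0 B 0 0 * Δ) = 1 ∧
      IsUnit (1 - fromBlocks 0 B 0 0 * Δ) ∧
      (1 - fromBlocks 0 B 0 0 * Δ)⁻¹ = 1 + fromBlocks 0 B 0 0 * Δ ∧
      (1 - fromBlocks 0 B 0 0 * Δ).det = 1 := by
  refine ⟨fromBlocks_strictUpper_sq B, fun Δ hΔ => ?_⟩
  rw [fromBlocks_strictUpper_mul B hΔ]
  have sq_eq_zero := fromBlocks_strictUpper_sq (B * Δ.toBlocks₂₂)
  have right_inv := one_sub_mul_one_add_of_sq_eq_zero sq_eq_zero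
  exact ⟨sq_eq_zero, right_inv, one_add_mul_one_sub_of_sq_eq_zero sq_eq_zero,
    .of_mul_eq_one _ right_inv, inv_eq_right_inv right_inv,
    det_one_sub_fromBlocks_strictUpper _⟩

end SquareMatrices

/-- `M₂₂² = 0`, and for every diagonal `Δ` one has `(M₂₂Δ)² = 0`;
consequently `I - M₂₂Δ` is invertible with inverse `I + M₂₂Δ` and
`det(I - M₂₂Δ) = 1` for every diagonal `Δ`. -/
theorem lpgrnn_M22_wellPosed {h : ℕ} (G : Matrix (Fin h) (Fin h) ℝ) :
    (lpgrnnM22 G) ^ 2 = 0 ∧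
    ∀ Δ : Matrix (Fin h ⊕ Fin h) (Fin h ⊕ Fin h) ℝ, Δ.IsDiag →
      (lpgrnnM22 G * Δ) ^ 2 = 0 ∧
      (1 - lpgrnnM22 G * Δ) * (1 + lpgrnnM22 G * Δ) = 1 ∧
      (1 + lpgrnnM22 G * Δ) * (1 - lpgrnnM22 G * Δ) = 1 ∧
      IsUnit (1 - lpgrnnM22 G * Δ) ∧
      (1 - lpgrnnM22 G * Δ)⁻¹ = 1 + lpgrnnM22 G * Δ ∧
      (1 - lpgrnnM22 G * Δ).det = 1 := by
  have general := lpgrnn_M22_wellPosed_general ((1 / 2 : ℝ) • G)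
  exact ⟨general.1, fun Δ hΔ => general.2 Δ (toBlocks₂₁_eq_zero_of_isDiag hΔ)⟩
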